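/- The limit as N → ∞ of #(W̃ ∩ [1,N]²)/N² exists and equals 10/(3π²); that is, the number of pairs (p,q) ∈ W̃ with 1 ≤ p ≤ N and 1 ≤ q ≤ N, divided by N², tends to 10/(3π²). -/

import Mathlib

open Filter Topology

/-- `Γ = {(2k-1)·2^{2ℓ-1} : k, ℓ ∈ ℕ_{>0}}`. -/
def Gamma : Set ℕ := {m | ∃ k l : ℕ, 0 < k ∧ 0 < l ∧ m = (2*k-1) * 2^(2*l-1)}

/-- `W̃ = {(p,q) ∈ ℕ² : p ∉ Γ, q ∉ Γ, p and q coprime}`. -/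
def Wtilde : Set (ℕ × ℕ) :=
  {pq | pq.1 ∉ Gamma ∧ pq.2 ∉ Gamma ∧ Nat.Coprime pq.1 pq.2}

/-!
`Γ` is the set of positive integers of odd `2`-adic valuation. For a prime `p`, let `E` be the set
of integers of even `p`-adic valuation. Multiplication by `p` exchanges `E` and its complement, so
the counting function `f` of `E` satisfies `f N + f (N / p) = N`, and `E` has density `p / (p + 1)`.
For squarefree `d`, the set `{k | d * k ∈ E}` is `E` if `p ∤ d` and the complement of `E` if
`p ∣ d`. Möbius inversion over the common divisors `d` of a pair, with dominated convergence, gives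
the density of coprime pairs in `E × E` as
`∑ d, μ d / d ^ 2 * δ d ^ 2`, where `δ d = p / (p + 1)` if `p ∤ d` and `δ d = 1 / (p + 1)` if
`p ∣ d`. The terms with `p ∣ d` sum, before weighting, to `-1 / p ^ 2` times those with `p ∤ d`,
while all of them together sum to `1 / ζ(2) = 6 / π ^ 2`.
-/

open Finset
open scoped ArithmeticFunction.Moebius

section NaturalDensity

open Classical in
/-- The elements of `A` in `[1, N]`, from which natural densities are computed. -/
noncomputable def upTo (A : Set ℕ) (N : ℕ) : Finset ℕ := {n ∈ Icc 1 N | n ∈ A}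

/-- `A` has natural density `δ`. The element `0` of `A`, if present, is never counted. -/
def HasNatDensity (A : Set ℕ) (δ : ℝ) : Prop :=
  Tendsto (fun N : ℕ ↦ (#(upTo A N) : ℝ) / N) atTop (𝓝 δ)

variable {A B : Set ℕ} {δ : ℝ} {d n N : ℕ}

lemma mem_upTo : n ∈ upTo A N ↔ n ∈ Icc 1 N ∧ n ∈ A := by
  simp only [upTo, mem_filter]

lemma upTo_congr (h : ∀ n, 0 < n → (n ∈ A ↔ n ∈ B)) (N : ℕ) : upTo A N = upTo B N := by
  ext n
  simp only [mem_upTo, mem_Icc]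
  exact and_congr_right fun hn ↦ h n hn.1

lemma HasNatDensity.congr (hA : HasNatDensity A δ) (h : ∀ n, 0 < n → (n ∈ A ↔ n ∈ B)) :
    HasNatDensity B δ :=
  Tendsto.congr (fun N ↦ by rw [upTo_congr h]) hA

lemma card_upTo_add_card_upTo_compl (A : Set ℕ) (N : ℕ) : #(upTo A N) + #(upTo Aᶜ N) = N := by
  classical
  simpa [upTo] using card_filter_add_card_filter_not (s := Icc 1 N) (· ∈ A)

lemma card_upTo_le (A : Set ℕ) (N : ℕ) : #(upTo A N) ≤ N :=
  (Nat.le_add_right _ _).trans_eq (card_upTo_add_card_upTo_compl A N)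

lemma HasNatDensity.compl (hA : HasNatDensity A δ) : HasNatDensity Aᶜ (1 - δ) := by
  refine (Tendsto.const_sub 1 hA).congr' ?_
  filter_upwards [eventually_ne_atTop 0] with N hN
  have hsum : (#(upTo A N) : ℝ) + #(upTo Aᶜ N) = N := mod_cast card_upTo_add_card_upTo_compl A N
  field_simp
  linarith

lemma filter_dvd_upTo_eq_empty (hd : d ∉ Icc 1 N) :
    {n ∈ upTo A N | d ∣ n} = ∅ := by
  refine filter_eq_empty_iff.2 fun n hn hdvd ↦ hd ?_
  have hn := mem_Icc.1 (mem_upTo.1 hn).1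
  exact mem_Icc.2 ⟨Nat.pos_of_dvd_of_pos hdvd hn.1, (Nat.le_of_dvd hn.1 hdvd).trans hn.2⟩

lemma card_filter_dvd_upTo (A : Set ℕ) (d N : ℕ) :
    #{n ∈ upTo A N | d ∣ n} = #(upTo ((d * ·) ⁻¹' A) (N / d)) := by
  rcases d.eq_zero_or_pos with rfl | hd
  · rw [filter_dvd_upTo_eq_empty (by simp)]
    simp [upTo]
  symm
  refine card_bij (fun k _ ↦ d * k) (fun k hk ↦ ?_)
    (fun _ _ _ _ h ↦ Nat.eq_of_mul_eq_mul_left hd h) (fun n hn ↦ ?_)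
  · simp only [mem_upTo, mem_Icc, Nat.le_div_iff_mul_le hd, mul_comm _ d] at hk
    simp only [mem_filter, mem_upTo, mem_Icc]
    exact ⟨⟨⟨Nat.mul_pos hd hk.1.1, hk.1.2⟩, hk.2⟩, dvd_mul_right d k⟩
  · obtain ⟨hmem, k, rfl⟩ := mem_filter.1 hn
    simp only [mem_upTo, mem_Icc] at hmem
    refine ⟨k, ?_, rfl⟩
    simp only [mem_upTo, mem_Icc, Nat.le_div_iff_mul_le hd, mul_comm _ d]
    exact ⟨⟨Nat.pos_of_mul_pos_left hmem.1.1, hmem.1.2⟩, hmem.2⟩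

lemma card_filter_dvd_upTo_div_le (A : Set ℕ) (d N : ℕ) :
    (#{n ∈ upTo A N | d ∣ n} : ℝ) / N ≤ 1 / d := by
  have hcard : (#{n ∈ upTo A N | d ∣ n} : ℝ) ≤ N / d := by
    rw [card_filter_dvd_upTo]
    exact (Nat.cast_le.2 (card_upTo_le _ _)).trans Nat.cast_div_le
  calc (#{n ∈ upTo A N | d ∣ n} : ℝ) / N ≤ N / d / N := by gcongr
    _ = N / N / d := div_right_comm _ _ _
    _ ≤ 1 / d := by gcongr; exact div_self_le_one _

lemma tendsto_comp_natDiv_div {f : ℕ → ℝ} {c : ℝ} (hd : d ≠ 0)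
    (hf : Tendsto (fun N : ℕ ↦ f N / N) atTop (𝓝 c)) :
    Tendsto (fun N : ℕ ↦ f (N / d) / N) atTop (𝓝 (c / d)) := by
  have hfloor : Tendsto (fun N : ℕ ↦ ((N / d : ℕ) : ℝ) / N) atTop (𝓝 (1 / d)) := by
    refine ((tendsto_nat_floor_mul_div_atTop (R := ℝ) (a := 1 / d) (by positivity)).comp
      tendsto_natCast_atTop_atTop).congr fun N ↦ ?_
    rw [Function.comp_apply, one_div_mul_eq_div, Nat.floor_div_eq_div]
  have hprod := (hf.comp (Nat.tendsto_div_const_atTop hd)).mul hfloor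
  rw [mul_one_div] at hprod
  refine hprod.congr' ?_
  filter_upwards [eventually_ge_atTop d] with N hN
  have hquot : ((N / d : ℕ) : ℝ) ≠ 0 := mod_cast (Nat.div_pos hN (Nat.pos_of_ne_zero hd)).ne'
  rw [Function.comp_apply, div_mul_div_cancel₀ hquot]

lemma HasNatDensity.tendsto_card_filter_dvd (hd : d ≠ 0) (hA : HasNatDensity ((d * ·) ⁻¹' A) δ) :
    Tendsto (fun N : ℕ ↦ (#{n ∈ upTo A N | d ∣ n} : ℝ) / N) atTop (𝓝 (δ / d)) := by
  simpa only [card_filter_dvd_upTo] using tendsto_comp_natDiv_div hd hA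

end NaturalDensity

section CoprimePairs

/-- The pairs of coprime numbers in `A × B`. -/
def coprimePairs (A B : Set ℕ) : Set (ℕ × ℕ) := {x | x.1 ∈ A ∧ x.2 ∈ B ∧ Nat.Coprime x.1 x.2}

/-- `S ⊆ ℕ²` has density `δ` with respect to the squares `[1, N]²`. -/
def HasPairDensity (S : Set (ℕ × ℕ)) (δ : ℝ) : Prop :=
  Tendsto (fun N : ℕ ↦
      ((S ∩ {x : ℕ × ℕ | x.1 ∈ Set.Icc 1 N ∧ x.2 ∈ Set.Icc 1 N}).ncard : ℝ) / (N : ℝ) ^ 2)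
    atTop (𝓝 δ)

lemma sum_divisors_moebius (n : ℕ) : ∑ d ∈ n.divisors, μ d = if n = 1 then 1 else 0 := by
  rw [← ArithmeticFunction.coe_mul_zeta_apply, ArithmeticFunction.moebius_mul_coe_zeta,
    ArithmeticFunction.one_apply]

lemma divisors_gcd_eq_filter_Icc {m n N : ℕ} (hm : m ∈ Icc 1 N) :
    (m.gcd n).divisors = {d ∈ Icc 1 N | d ∣ m ∧ d ∣ n} := by
  rw [mem_Icc] at hm
  ext d
  simp only [Nat.mem_divisors, mem_filter, mem_Icc, Nat.dvd_gcd_iff]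
  constructor
  · rintro ⟨hdvd, -⟩
    exact ⟨⟨Nat.pos_of_dvd_of_pos hdvd.1 hm.1, (Nat.le_of_dvd hm.1 hdvd.1).trans hm.2⟩, hdvd⟩
  · rintro ⟨-, hdvd⟩
    exact ⟨hdvd, (Nat.gcd_pos_of_pos_left n hm.1).ne'⟩

lemma card_filter_coprime_product {s : Finset ℕ} (t : Finset ℕ) {N : ℕ} (hs : s ⊆ Icc 1 N) :
    (#{x ∈ s ×ˢ t | Nat.Coprime x.1 x.2} : ℤ) =
      ∑ d ∈ Icc 1 N, μ d * (#{m ∈ s | d ∣ m} * #{n ∈ t | d ∣ n}) := by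
  calc (#{x ∈ s ×ˢ t | Nat.Coprime x.1 x.2} : ℤ)
      = ∑ x ∈ s ×ˢ t, ∑ d ∈ Icc 1 N with d ∣ x.1 ∧ d ∣ x.2, μ d := by
        rw [natCast_card_filter]
        refine sum_congr rfl fun x hx ↦ ?_
        rw [← divisors_gcd_eq_filter_Icc (hs (mem_product.1 hx).1), sum_divisors_moebius]
    _ = ∑ d ∈ Icc 1 N, ∑ x ∈ s ×ˢ t with d ∣ x.1 ∧ d ∣ x.2, μ d := by
        simp only [sum_filter]
        exact sum_comm
    _ = ∑ d ∈ Icc 1 N, μ d * (#{m ∈ s | d ∣ m} * #{n ∈ t | d ∣ n}) := by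
        refine sum_congr rfl fun d _ ↦ ?_
        rw [filter_product, sum_const, card_product, nsmul_eq_mul, mul_comm, Nat.cast_mul]

lemma ncard_coprimePairs_inter_square (A B : Set ℕ) (N : ℕ) :
    (coprimePairs A B ∩ {x | x.1 ∈ Set.Icc 1 N ∧ x.2 ∈ Set.Icc 1 N}).ncard =
      #{x ∈ upTo A N ×ˢ upTo B N | Nat.Coprime x.1 x.2} := by
  rw [← Set.ncard_coe_finset]
  congr 1
  ext x
  simp only [coprimePairs, coe_filter, mem_product, mem_upTo, mem_Icc, Set.mem_inter_iff,
    Set.mem_ofPred_eq, Set.mem_Icc]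
  tauto

lemma ncard_coprimePairs_div_sq_eq_tsum (A B : Set ℕ) (N : ℕ) :
    ((coprimePairs A B ∩ {x | x.1 ∈ Set.Icc 1 N ∧ x.2 ∈ Set.Icc 1 N}).ncard : ℝ) / (N : ℝ) ^ 2 =
      ∑' d : ℕ, (μ d : ℝ) *
        ((#{n ∈ upTo A N | d ∣ n} / N : ℝ) * (#{n ∈ upTo B N | d ∣ n} / N : ℝ)) := by
  have hsub : upTo A N ⊆ Icc 1 N := fun n hn ↦ (mem_upTo.1 hn).1
  have hcount : (#{x ∈ upTo A N ×ˢ upTo B N | Nat.Coprime x.1 x.2} : ℝ) =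
      ∑ d ∈ Icc 1 N, (μ d : ℝ) * (#{n ∈ upTo A N | d ∣ n} * #{n ∈ upTo B N | d ∣ n}) :=
    mod_cast card_filter_coprime_product (upTo B N) hsub
  rw [ncard_coprimePairs_inter_square, hcount, tsum_eq_sum (s := Icc 1 N), sum_div]
  · refine sum_congr rfl fun d _ ↦ ?_
    rw [mul_div_assoc, sq, mul_div_mul_comm]
  · intro d hd
    simp [filter_dvd_upTo_eq_empty hd]

theorem hasPairDensity_coprimePairs {A B : Set ℕ} {α β : ℕ → ℝ}
    (hA : ∀ d, Squarefree d → HasNatDensity ((d * ·) ⁻¹' A) (α d))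
    (hB : ∀ d, Squarefree d → HasNatDensity ((d * ·) ⁻¹' B) (β d)) :
    HasPairDensity (coprimePairs A B) (∑' d : ℕ, (μ d : ℝ) / (d : ℝ) ^ 2 * (α d * β d)) := by
  have hterm (d : ℕ) : Tendsto (fun N : ℕ ↦ (μ d : ℝ) *
      ((#{n ∈ upTo A N | d ∣ n} / N : ℝ) * (#{n ∈ upTo B N | d ∣ n} / N : ℝ))) atTop
      (𝓝 ((μ d : ℝ) / (d : ℝ) ^ 2 * (α d * β d))) := by
    by_cases hd : Squarefree d
    · convert (((hA d hd).tendsto_card_filter_dvd hd.ne_zero).mul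
        ((hB d hd).tendsto_card_filter_dvd hd.ne_zero)).const_mul (μ d : ℝ) using 2
      ring
    · simp [ArithmeticFunction.moebius_eq_zero_of_not_squarefree hd]
  have hbound (N d : ℕ) : ‖(μ d : ℝ) *
      ((#{n ∈ upTo A N | d ∣ n} / N : ℝ) * (#{n ∈ upTo B N | d ∣ n} / N : ℝ))‖ ≤
      1 / (d : ℝ) ^ 2 := by
    have hμ : ‖(μ d : ℝ)‖ ≤ 1 := by
      rw [Real.norm_eq_abs]
      exact_mod_cast ArithmeticFunction.abs_moebius_le_one
    rw [norm_mul, Real.norm_of_nonneg (by positivity :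
      (0 : ℝ) ≤ (#{n ∈ upTo A N | d ∣ n} / N : ℝ) * (#{n ∈ upTo B N | d ∣ n} / N : ℝ))]
    calc _ ≤ 1 * ((1 / d : ℝ) * (1 / d)) := by
          exact mul_le_mul hμ (mul_le_mul (card_filter_dvd_upTo_div_le A d N)
            (card_filter_dvd_upTo_div_le B d N) (by positivity) (by positivity))
            (by positivity) zero_le_one
      _ = 1 / (d : ℝ) ^ 2 := by ring
  unfold HasPairDensity
  simp only [ncard_coprimePairs_div_sq_eq_tsum]
  exact tendsto_tsum_of_dominated_convergence (Real.summable_one_div_nat_pow.2 one_lt_two) hterm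
    (.of_forall hbound)

end CoprimePairs

section Recurrence

lemma tendsto_natLog_div_atTop (b : ℕ) :
    Tendsto (fun N : ℕ ↦ (Nat.log b N : ℝ) / N) atTop (𝓝 0) := by
  have hlogb : Tendsto (fun N : ℕ ↦ Real.logb b N / N) atTop (𝓝 0) := by
    simpa only [zero_div, Function.comp_def, id, Real.logb, div_right_comm] using
      (Real.isLittleO_log_id_atTop.tendsto_div_nhds_zero.comp
        (tendsto_natCast_atTop_atTop (R := ℝ))).div_const (Real.log b)
  refine squeeze_zero (fun N ↦ by positivity) (fun N ↦ ?_) hlogb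
  gcongr
  exact Real.natLog_le_logb N b

variable {f : ℕ → ℕ} {b : ℕ}

/- The error `e N = f N - b / (b + 1) * N` satisfies `e N + e (N / b) = (N % b) / (b + 1)`, so each
division by `b` costs at most `1`. -/
lemma abs_sub_le_natLog_of_add_comp_div_eq (hb : 1 < b) (hf : ∀ N, f N + f (N / b) = N) (N : ℕ) :
    |(f N : ℝ) - b / (b + 1) * N| ≤ Nat.log b N + 1 := by
  have herror (N : ℕ) : ((f N : ℝ) - b / (b + 1) * N) + (f (N / b) - b / (b + 1) * (N / b : ℕ)) =
      (N % b : ℕ) / (b + 1) := by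
    have hrec : (f N : ℝ) + f (N / b) = N := mod_cast hf N
    have hdivmod : (b : ℝ) * (N / b : ℕ) + (N % b : ℕ) = N := mod_cast Nat.div_add_mod N b
    field_simp
    linear_combination (b + 1) * hrec - hdivmod
  have hmod (N : ℕ) : ((N % b : ℕ) : ℝ) / (b + 1) ≤ 1 := by
    rw [div_le_one (by positivity)]
    exact_mod_cast (Nat.mod_lt N (by omega)).le.trans b.le_succ
  have hmod_nonneg (N : ℕ) : 0 ≤ ((N % b : ℕ) : ℝ) / (b + 1) := by positivity
  induction N using Nat.strong_induction_on with
  | _ N ih =>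
    have hstep := herror N
    rcases lt_or_ge N b with hNb | hbN
    · have hf0 : f 0 = 0 := by simpa using hf 0
      rw [Nat.div_eq_of_lt hNb, hf0] at hstep
      simp only [Nat.cast_zero, mul_zero, sub_zero, add_zero] at hstep
      rw [hstep, Nat.log_of_lt hNb, abs_of_nonneg (hmod_nonneg N), Nat.cast_zero, zero_add]
      exact hmod N
    · have hdiv := abs_le.1 (ih (N / b) (Nat.div_lt_self (by omega) hb))
      rw [Nat.log_of_one_lt_of_le hb hbN, Nat.cast_succ, abs_le]
      constructor <;> linarith [hmod N, hmod_nonneg N]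

lemma tendsto_div_of_add_comp_div_eq (hb : 1 < b) (hf : ∀ N, f N + f (N / b) = N) :
    Tendsto (fun N : ℕ ↦ (f N : ℝ) / N) atTop (𝓝 (b / (b + 1))) := by
  have hbound : Tendsto (fun N : ℕ ↦ ((Nat.log b N : ℝ) + 1) / N) atTop (𝓝 0) := by
    simpa only [add_div, add_zero] using
      (tendsto_natLog_div_atTop b).add tendsto_one_div_atTop_nhds_zero_nat
  rw [tendsto_iff_dist_tendsto_zero]
  refine squeeze_zero' (.of_forall fun _ ↦ dist_nonneg) ?_ hbound
  filter_upwards [eventually_gt_atTop 0] with N hN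
  have hN : (0 : ℝ) < N := mod_cast hN
  rw [Real.dist_eq, ← mul_div_cancel_right₀ ((b : ℝ) / (b + 1)) hN.ne', ← sub_div, abs_div,
    abs_of_pos hN]
  gcongr
  exact abs_sub_le_natLog_of_add_comp_div_eq hb hf N

end Recurrence

section EvenValuation

/-- The numbers of even `p`-adic valuation. It contains `0`, since `padicValNat p 0 = 0`. -/
def evenValuation (p : ℕ) : Set ℕ := {n | Even (padicValNat p n)}

lemma dvd_of_notMem_evenValuation {p k : ℕ} (hk : k ∉ evenValuation p) : p ∣ k := by
  contrapose! hk
  simp [evenValuation, padicValNat.eq_zero_of_not_dvd hk]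

variable {p d k : ℕ} [hp : Fact p.Prime]

lemma mul_mem_evenValuation_iff_of_not_dvd (hd : ¬p ∣ d) (hk : 0 < k) :
    d * k ∈ evenValuation p ↔ k ∈ evenValuation p := by
  have hd0 : d ≠ 0 := fun h ↦ hd (h ▸ dvd_zero p)
  simp only [evenValuation, Set.mem_ofPred_eq, padicValNat.mul hd0 hk.ne',
    padicValNat.eq_zero_of_not_dvd hd, zero_add]

lemma prime_mul_mem_evenValuation_iff (hk : 0 < k) :
    p * k ∈ evenValuation p ↔ k ∉ evenValuation p := by
  simp only [evenValuation, Set.mem_ofPred_eq, padicValNat.mul hp.out.ne_zero hk.ne',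
    padicValNat_self, Nat.even_add, Nat.not_even_one, false_iff]

lemma not_dvd_of_squarefree_prime_mul {m : ℕ} (h : Squarefree (p * m)) : ¬p ∣ m := by
  rw [← hp.out.coprime_iff_not_dvd]
  exact Nat.coprime_of_squarefree_mul h

lemma mul_mem_evenValuation_iff_of_dvd (hd : Squarefree d) (hpd : p ∣ d) (hk : 0 < k) :
    d * k ∈ evenValuation p ↔ k ∉ evenValuation p := by
  obtain ⟨m, rfl⟩ := hpd
  have hm : 0 < m := Nat.pos_of_ne_zero (right_ne_zero_of_mul hd.ne_zero)
  rw [mul_assoc, prime_mul_mem_evenValuation_iff (Nat.mul_pos hm hk),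
    mul_mem_evenValuation_iff_of_not_dvd (not_dvd_of_squarefree_prime_mul hd) hk]

lemma card_upTo_compl_evenValuation (p N : ℕ) [Fact p.Prime] :
    #(upTo (evenValuation p)ᶜ N) = #(upTo (evenValuation p) (N / p)) := by
  have hmultiples : {n ∈ upTo (evenValuation p)ᶜ N | p ∣ n} = upTo (evenValuation p)ᶜ N :=
    filter_true_of_mem fun n hn ↦ dvd_of_notMem_evenValuation (mem_upTo.1 hn).2
  rw [← hmultiples, card_filter_dvd_upTo, upTo_congr fun k hk ↦ ?_]
  exact (prime_mul_mem_evenValuation_iff hk).not_left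

lemma hasNatDensity_evenValuation (p : ℕ) [hp : Fact p.Prime] :
    HasNatDensity (evenValuation p) (p / (p + 1)) := by
  refine tendsto_div_of_add_comp_div_eq hp.out.one_lt fun N ↦ ?_
  rw [← card_upTo_compl_evenValuation, card_upTo_add_card_upTo_compl]

lemma hasNatDensity_mul_preimage_evenValuation (hd : Squarefree d) :
    HasNatDensity ((d * ·) ⁻¹' evenValuation p)
      (if p ∣ d then 1 / (p + 1) else p / (p + 1)) := by
  split_ifs with hpd
  · have hcompl := (hasNatDensity_evenValuation p).compl
    rw [one_sub_div (by positivity), add_sub_cancel_left] at hcompl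
    exact hcompl.congr fun k hk ↦ (mul_mem_evenValuation_iff_of_dvd hd hpd hk).symm
  · exact (hasNatDensity_evenValuation p).congr fun k hk ↦
      (mul_mem_evenValuation_iff_of_not_dvd hpd hk).symm

lemma padicValNat_mul_pow_of_not_dvd {c : ℕ} (hc : ¬p ∣ c) (j : ℕ) :
    padicValNat p (c * p ^ j) = j := by
  have hc0 : c ≠ 0 := fun h ↦ hc (h ▸ dvd_zero p)
  rw [padicValNat.mul hc0 (pow_ne_zero j hp.out.ne_zero), padicValNat.prime_pow,
    padicValNat.eq_zero_of_not_dvd hc, zero_add]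

lemma mem_Gamma_iff_odd_padicValNat (m : ℕ) : m ∈ Gamma ↔ Odd (padicValNat 2 m) := by
  constructor
  · rintro ⟨k, l, hk, hl, rfl⟩
    rw [padicValNat_mul_pow_of_not_dvd (by omega)]
    exact ⟨l - 1, by omega⟩
  · intro hodd
    have hm : m ≠ 0 := by
      rintro rfl
      simp at hodd
    obtain ⟨j, c, hc, rfl⟩ := Nat.exists_eq_two_pow_mul_odd hm
    rw [mul_comm, padicValNat_mul_pow_of_not_dvd hc.not_two_dvd_nat] at hodd
    obtain ⟨i, rfl⟩ := hc
    obtain ⟨l, rfl⟩ := hodd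
    exact ⟨i + 1, l + 1, i.succ_pos, l.succ_pos, mul_comm _ _⟩

lemma compl_Gamma : Gammaᶜ = evenValuation 2 := by
  ext m
  rw [Set.mem_compl_iff, mem_Gamma_iff_odd_padicValNat, Nat.not_odd_iff_even]
  rfl

end EvenValuation

section MoebiusSeries

lemma hasSum_moebius_div_sq :
    HasSum (fun d : ℕ ↦ (μ d : ℝ) / (d : ℝ) ^ 2) (6 / Real.pi ^ 2) := by
  have hre : 1 < (2 : ℂ).re := by norm_num
  have hinv := ArithmeticFunction.LSeries_zeta_mul_Lseries_moebius hre
  rw [ArithmeticFunction.LSeries_zeta_eq_riemannZeta hre, riemannZeta_two] at hinv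
  have hvalue : LSeries (fun n ↦ ((μ n : ℤ) : ℂ)) 2 = ((6 / Real.pi ^ 2 : ℝ) : ℂ) := by
    rw [eq_inv_of_mul_eq_one_right hinv]
    push_cast
    rw [inv_div]
  have hsum := (ArithmeticFunction.LSeriesSummable_moebius_iff.2 hre).LSeriesHasSum
  rw [hvalue] at hsum
  refine Complex.hasSum_ofReal.1 (hsum.congr_fun ?_)
  intro d
  rw [LSeries.term_of_ne_zero' two_ne_zero]
  push_cast
  rw [Complex.cpow_ofNat]

lemma hasSum_mul_ite_dvd {K : Type*} [NormedField K] [CompleteSpace K] {f : ℕ → K} {S c : K}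
    {p : ℕ} (hf : HasSum f S) (hp : p ≠ 0) (hc : 1 + c ≠ 0)
    (hfp : ∀ d, f (p * d) = if p ∣ d then 0 else c * f d) (a b : K) :
    HasSum (fun d ↦ f d * if p ∣ d then a else b) (S * (a * c + b) / (1 + c)) := by
  obtain ⟨T, hT⟩ : Summable fun d ↦ if p ∣ d then 0 else f d := by
    refine (hf.summable.indicator {d | ¬p ∣ d}).congr fun d ↦ ?_
    simp [Set.indicator_apply]
  have hmultiples : HasSum (fun d ↦ if p ∣ d then f d else 0) (c * T) := by
    refine ((mul_right_injective₀ hp).hasSum_iff fun d hd ↦ ?_).1 ?_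
    · exact if_neg fun ⟨k, hk⟩ ↦ hd ⟨k, hk.symm⟩
    · refine (hT.mul_left c).congr_fun fun d ↦ ?_
      simp [hfp]
  have htotal : T + c * T = S := by
    refine ((hT.add hmultiples).congr_fun fun d ↦ ?_).unique hf
    split_ifs <;> simp
  have hvalue : a * (c * T) + b * T = S * (a * c + b) / (1 + c) := by
    rw [← htotal]
    field_simp
  rw [← hvalue]
  refine ((hmultiples.mul_left a).add (hT.mul_left b)).congr_fun fun d ↦ ?_
  split_ifs <;> ring

lemma moebius_prime_mul {p : ℕ} [hp : Fact p.Prime] (d : ℕ) :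
    μ (p * d) = if p ∣ d then 0 else -μ d := by
  split_ifs with hpd
  · exact ArithmeticFunction.moebius_eq_zero_of_not_squarefree
      fun h ↦ not_dvd_of_squarefree_prime_mul h hpd
  · rw [ArithmeticFunction.isMultiplicative_moebius.map_mul_of_coprime
      (hp.out.coprime_iff_not_dvd.2 hpd), ArithmeticFunction.moebius_apply_prime hp.out,
      neg_one_mul]

lemma hasSum_moebius_div_sq_mul_ite_dvd (p : ℕ) [hp : Fact p.Prime] (a b : ℝ) :
    HasSum (fun d : ℕ ↦ (μ d : ℝ) / (d : ℝ) ^ 2 * if p ∣ d then a else b)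
      (6 / Real.pi ^ 2 * (b * p ^ 2 - a) / (p ^ 2 - 1)) := by
  have hp0 : (p : ℝ) ≠ 0 := mod_cast hp.out.ne_zero
  have hp1 : (p : ℝ) ^ 2 - 1 ≠ 0 :=
    (sub_pos.2 (one_lt_pow₀ (mod_cast hp.out.one_lt) two_ne_zero)).ne'
  have hc : 1 + -1 / (p : ℝ) ^ 2 = (p ^ 2 - 1) / p ^ 2 := by
    field_simp
    ring
  have hscale (d : ℕ) : (μ (p * d) : ℝ) / ((p * d : ℕ) : ℝ) ^ 2 =
      if p ∣ d then 0 else -1 / (p : ℝ) ^ 2 * ((μ d : ℝ) / (d : ℝ) ^ 2) := by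
    rw [moebius_prime_mul]
    split_ifs
    · simp
    · push_cast
      ring
  have hvalue : 6 / Real.pi ^ 2 * (b * p ^ 2 - a) / (p ^ 2 - 1) =
      6 / Real.pi ^ 2 * (a * (-1 / (p : ℝ) ^ 2) + b) / (1 + -1 / (p : ℝ) ^ 2) := by
    rw [hc]
    field_simp
    ring
  rw [hvalue]
  exact hasSum_mul_ite_dvd hasSum_moebius_div_sq hp.out.ne_zero
    (hc ▸ div_ne_zero hp1 (pow_ne_zero 2 hp0)) hscale a b

end MoebiusSeries

theorem density_Wtilde_general (p : ℕ) [hp : Fact p.Prime] :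
    HasPairDensity (coprimePairs (evenValuation p) (evenValuation p))
      (6 / Real.pi ^ 2 * ((p ^ 2 + 1) / (p + 1) ^ 2)) := by
  have hp1 : (p : ℝ) - 1 ≠ 0 := sub_ne_zero.2 (mod_cast hp.out.one_lt.ne')
  have hvalue := (hasSum_moebius_div_sq_mul_ite_dvd p
    ((1 / (p + 1) : ℝ) * (1 / (p + 1))) ((p / (p + 1) : ℝ) * (p / (p + 1)))).tsum_eq
  convert hasPairDensity_coprimePairs
    (fun d hd ↦ hasNatDensity_mul_preimage_evenValuation (p := p) hd)
    (fun d hd ↦ hasNatDensity_mul_preimage_evenValuation (p := p) hd) using 1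
  simp only [ite_mul_ite, hvalue]
  rw [show (p : ℝ) ^ 2 - 1 = (p - 1) * (p + 1) by ring]
  field_simp
  ring

theorem density_Wtilde :
    Tendsto (fun N : ℕ =>
        ((Wtilde ∩ {pq : ℕ × ℕ | pq.1 ∈ Set.Icc 1 N ∧ pq.2 ∈ Set.Icc 1 N}).ncard : ℝ)
          / (N : ℝ)^2)
      atTop (𝓝 (10 / (3 * Real.pi^2))) := by
  have hpairs : Wtilde = coprimePairs (evenValuation 2) (evenValuation 2) := compl_Gamma ▸ rfl
  have hvalue : 10 / (3 * Real.pi ^ 2) =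
      6 / Real.pi ^ 2 * (((2 : ℕ) ^ 2 + 1) / ((2 : ℕ) + 1) ^ 2) := by
    norm_num
    ring
  rw [hpairs, hvalue]
  exact density_Wtilde_general 2
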